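/- Let w be a double occurrence word on an n-element set V, let v ∈ V, and let w' be the double occurrence word obtained from w by reversing the subword strictly between the two occurrences of v. Let π be the permutation of the column index set V×{φ,χ,ψ} that swaps (v,φ) with (v,ψ), swaps (u,χ) with (u,ψ) for every u ≠ v having exactly one occurrence in the interior of v, and fixes all other columns. Then there exist an n×n integer matrix U with det(U) = ±1 (a product of elementary integer row operations: row negations and additions of integer multiples of one row to another) and a diagonal matrix D with diagonal entries ±1 such that IAS_{w'} equals U·(IAS_w with its columns permuted by π)·D. -/

import Mathlib

open Matrix

noncomputable section

/-- `w` is a double occurrence word on `V`: each element of `V` occurs exactly twice. -/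
def IsDOW {V : Type*} [DecidableEq V] (w : List V) : Prop := ∀ v : V, w.count v = 2

/-- Distinct `u` and `v` are interlaced in `w`: their occurrences appear in the order
`u v u v` or `v u v u`. -/
def Interlaced {V : Type*} (w : List V) (u v : V) : Prop :=
  [u, v, u, v].Sublist w ∨ [v, u, v, u].Sublist w

/-- The position of the first occurrence `v⁻` of `v` in `w`. -/
def fstIdx {V : Type*} [DecidableEq V] (w : List V) (v : V) : ℕ :=
  w.findIdx (fun x => decide (x = v))

/-- The position of the second occurrence `v⁺` of `v` in `w`. -/
def sndIdx {V : Type*} [DecidableEq V] (w : List V) (v : V) : ℕ :=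
  fstIdx w v + 1 + (w.drop (fstIdx w v + 1)).findIdx (fun x => decide (x = v))

/-- Position `k` lies in the interior of `v` in `w`, i.e. strictly between `v⁻` and `v⁺`. -/
def inInterior {V : Type*} [DecidableEq V] (w : List V) (v : V) (k : ℕ) : Prop :=
  fstIdx w v < k ∧ k < sndIdx w v

instance {V : Type*} [DecidableEq V] (w : List V) (v : V) (k : ℕ) :
    Decidable (inInterior w v k) := by unfold inInterior; infer_instance

/-- The integer matrix `IAS_w = (I | A | B)` associated with a double occurrence word `w`;
the columns `(u,0)`, `(u,1)`, `(u,2)` are the `φ`, `χ`, `ψ` columns of `u`. -/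
def IASword {V : Type*} [DecidableEq V] (w : List V) : Matrix V (V × Fin 3) ℤ :=
  Matrix.of fun v p =>
    if p.2 = 0 then (if v = p.1 then 1 else 0)
    else if p.2 = 1 then
      (if v = p.1 then 0 else
        (if inInterior w v (sndIdx w p.1) then 1 else 0)
          - (if inInterior w v (fstIdx w p.1) then 1 else 0))
    else
      (if v = p.1 then 1 else
        (if inInterior w v (fstIdx w p.1) then 1 else 0)
          + (if inInterior w v (sndIdx w p.1) then 1 else 0))


/-- The word obtained from `w` by reversing the subword strictly between the two
occurrences of `v`. -/
def reverseInterior {V : Type*} [DecidableEq V] (w : List V) (v : V) : List V :=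
  w.take (fstIdx w v + 1)
    ++ ((w.drop (fstIdx w v + 1)).take (sndIdx w v - (fstIdx w v + 1))).reverse
    ++ w.drop (sndIdx w v)

/-- `u` has exactly one occurrence in the interior of `v` in `w`. -/
def exactlyOneIn {V : Type*} [DecidableEq V] (w : List V) (v u : V) : Prop :=
  Xor' (inInterior w v (fstIdx w u)) (inInterior w v (sndIdx w u))

open Classical in
/-- The column permutation: swap `(v,φ) ↔ (v,ψ)`, and `(u,χ) ↔ (u,ψ)` for each
`u ≠ v` having exactly one occurrence in the interior of `v`; fix all other columns. -/
def najiPerm {V : Type*} [DecidableEq V] (w : List V) (v : V) :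
    V × Fin 3 → V × Fin 3 := fun p =>
  if p.1 = v then
    (if p.2 = 0 then (v, 2) else if p.2 = 2 then (v, 0) else p)
  else if exactlyOneIn w v p.1 then
    (if p.2 = 1 then (p.1, 2) else if p.2 = 2 then (p.1, 1) else p)
  else p

/-! Let `ι_x` be the indicator function, on positions, of the interior of `x`, and let `ρ` be the
permutation of positions which reflects the interior of `v`. The `χ` and `ψ` columns of `u` are, off
row `u`, the difference and the sum of the values of `ι_x` at the two occurrences of `u`. Write `ι'`
for the same functions in the reversed word. If `k` is not an occurrence of `x`, then
`ι'_x (ρ k) = ± (s_x * ι_x k + r_x * ι_v k)`, where `s_x = ± 1` and `r_x` depend only on the row `x`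
and the sign in front is `-1` exactly when `k` is in the interior of `v`. Hence `U` scales row `x`
by `s_x` and adds `r_x` times row `v`. If exactly one occurrence of `u` is in the interior of `v`,
the relative sign turns the sum into the difference, so that `χ` and `ψ` are swapped. If both are,
the reversal of their order compensates the sign in `χ`, and `ψ` is negated. Since `-r_x` is the
number of occurrences of `v` in the interior of `x`, that is, the entry of the `ψ` column of `v` in
row `x ≠ v`, the columns `φ` and `ψ` of `v` are swapped. -/

section Occurrences

variable {V : Type*} [DecidableEq V] {w : List V} {u v : V} {i j k : ℕ}

lemma getElem?_append_cons_eq_some_self_iff {α : Type*} {a : α} {l l' : List α} (ha : a ∉ l) :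
    (l ++ a :: l')[k]? = some a ↔
      k = l.length ∨ ∃ m, k = l.length + 1 + m ∧ l'[m]? = some a := by
  rcases lt_trichotomy k l.length with hk | rfl | hk
  · have hne : l[k]? ≠ some a := fun h => ha (List.mem_of_getElem? h)
    rw [List.getElem?_append_left hk]
    simp only [hne, false_iff, not_or, not_exists]
    exact ⟨hk.ne, fun m hm => by omega⟩
  · simp
  · obtain ⟨m, rfl⟩ := Nat.exists_eq_add_of_lt hk
    rw [List.getElem?_append_right hk.le, show l.length + m + 1 - l.length = m + 1 by omega,
      List.getElem?_cons_succ]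
    constructor
    · exact fun h => Or.inr ⟨m, by omega, h⟩
    · rintro (h | ⟨m', hm', h⟩)
      · omega
      · rwa [show m = m' by omega]

lemma idxOf_append_cons_self {a : V} {l l' : List V} (ha : a ∉ l) :
    (l ++ a :: l').idxOf a = l.length := by
  simp [List.idxOf_append_of_notMem ha]

lemma sndIdx_eq_idxOf (w : List V) (v : V) :
    sndIdx w v = fstIdx w v + 1 + (w.drop (fstIdx w v + 1)).idxOf v := rfl

lemma fstIdx_lt_sndIdx (w : List V) (v : V) : fstIdx w v < sndIdx w v := by
  rw [sndIdx_eq_idxOf]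
  omega

lemma IsDOW.exists_eq_append_cons_append_cons (hw : IsDOW w) (u : V) :
    ∃ l₁ l₂ l₃, w = l₁ ++ u :: (l₂ ++ u :: l₃) ∧ u ∉ l₁ ∧ u ∉ l₂ ∧ u ∉ l₃ := by
  have hcount := hw u
  obtain ⟨l₁, l, rfl, h₁⟩ :=
    List.eq_append_cons_of_mem (List.count_pos_iff.1 (by omega : 0 < w.count u))
  have hl : l.count u = 1 := by simpa [List.count_eq_zero.2 h₁] using hcount
  obtain ⟨l₂, l₃, rfl, h₂⟩ :=
    List.eq_append_cons_of_mem (List.count_pos_iff.1 (by omega : 0 < l.count u))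
  have h₃ : l₃.count u = 0 := by simpa [List.count_eq_zero.2 h₂] using hl
  exact ⟨l₁, l₂, l₃, rfl, h₁, h₂, List.count_eq_zero.1 h₃⟩

lemma IsDOW.getElem?_eq_some_iff (hw : IsDOW w) :
    w[k]? = some u ↔ k = fstIdx w u ∨ k = sndIdx w u := by
  obtain ⟨l₁, l₂, l₃, rfl, h₁, h₂, h₃⟩ := hw.exists_eq_append_cons_append_cons u
  have hfst : fstIdx (l₁ ++ u :: (l₂ ++ u :: l₃)) u = l₁.length := idxOf_append_cons_self h₁
  have hsnd : sndIdx (l₁ ++ u :: (l₂ ++ u :: l₃)) u = l₁.length + 1 + l₂.length := by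
    rw [sndIdx_eq_idxOf, hfst, List.drop_append, List.drop_eq_nil_of_le (Nat.le_succ _)]
    simp [idxOf_append_cons_self h₂]
  have hl₃ : ∀ m, l₃[m]? ≠ some u := fun m h => h₃ (List.mem_of_getElem? h)
  simp [getElem?_append_cons_eq_some_self_iff h₁, getElem?_append_cons_eq_some_self_iff h₂,
    hfst, hsnd, hl₃]

lemma IsDOW.getElem?_fstIdx (hw : IsDOW w) (u : V) : w[fstIdx w u]? = some u :=
  hw.getElem?_eq_some_iff.2 (Or.inl rfl)

lemma IsDOW.getElem?_sndIdx (hw : IsDOW w) (u : V) : w[sndIdx w u]? = some u :=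
  hw.getElem?_eq_some_iff.2 (Or.inr rfl)

lemma IsDOW.sndIdx_lt_length (hw : IsDOW w) (u : V) : sndIdx w u < w.length :=
  (List.getElem?_eq_some_iff.1 (hw.getElem?_sndIdx u)).1

lemma IsDOW.fstIdx_eq_and_sndIdx_eq (hw : IsDOW w) (hij : i < j) (hi : w[i]? = some u)
    (hj : w[j]? = some u) : fstIdx w u = i ∧ sndIdx w u = j := by
  have := fstIdx_lt_sndIdx w u
  rw [hw.getElem?_eq_some_iff] at hi hj
  omega

lemma IsDOW.fstIdx_ne_and_sndIdx_ne (hw : IsDOW w) (huv : u ≠ v) (hk : w[k]? = some v) :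
    k ≠ fstIdx w u ∧ k ≠ sndIdx w u := by
  rw [← not_or, ← hw.getElem?_eq_some_iff, hk, Option.some_inj]
  exact huv.symm

end Occurrences

section Reversal

variable {V : Type*} [DecidableEq V] {w : List V} {u v x : V} {i j k : ℕ}

/-- The permutation of positions induced by reversing the interior of `v`: it reflects the
interior and fixes every other position. -/
def reversePos (w : List V) (v : V) (k : ℕ) : ℕ :=
  if inInterior w v k then fstIdx w v + sndIdx w v - k else k

lemma reversePos_involutive (w : List V) (v : V) : Function.Involutive (reversePos w v) := by
  intro k
  grind [reversePos, inInterior]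

lemma reversePos_lt_reversePos (hij : i < j) (h : ¬ (inInterior w v i ∧ inInterior w v j)) :
    reversePos w v i < reversePos w v j := by
  grind [reversePos, inInterior]

lemma reversePos_lt_reversePos_of_inInterior (hij : i < j) (hi : inInterior w v i)
    (hj : inInterior w v j) : reversePos w v j < reversePos w v i := by
  grind [reversePos, inInterior]

lemma reverseInterior_perm (w : List V) (v : V) : (reverseInterior w v).Perm w := by
  have hlt := fstIdx_lt_sndIdx w v
  have hw : w = w.take (fstIdx w v + 1)
      ++ (w.drop (fstIdx w v + 1)).take (sndIdx w v - (fstIdx w v + 1))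
      ++ w.drop (sndIdx w v) := by
    rw [List.append_assoc, show w.drop (sndIdx w v)
      = (w.drop (fstIdx w v + 1)).drop (sndIdx w v - (fstIdx w v + 1)) by
        rw [List.drop_drop]; congr 1; omega, List.take_append_drop, List.take_append_drop]
  conv_rhs => rw [hw]
  exact ((List.reverse_perm _).append_left _).append_right _

lemma isDOW_reverseInterior (hw : IsDOW w) (v : V) : IsDOW (reverseInterior w v) :=
  fun u => (reverseInterior_perm w v).count_eq u ▸ hw u

lemma IsDOW.getElem?_reverseInterior (hw : IsDOW w) (v : V) (k : ℕ) :
    (reverseInterior w v)[k]? = w[reversePos w v k]? := by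
  have hlt := fstIdx_lt_sndIdx w v
  have hlen := hw.sndIdx_lt_length v
  have htake : (w.take (fstIdx w v + 1)).length = fstIdx w v + 1 := by simp; omega
  have hmid : ((w.drop (fstIdx w v + 1)).take (sndIdx w v - (fstIdx w v + 1))).length
      = sndIdx w v - (fstIdx w v + 1) := by simp; omega
  unfold reverseInterior
  simp only [List.append_assoc, List.getElem?_append, List.length_reverse, htake, hmid]
  by_cases hk : inInterior w v k
  · rw [reversePos, if_pos hk]
    obtain ⟨hfst, hsnd⟩ := hk
    rw [if_neg (by omega), if_pos (by omega), List.getElem?_reverse (by omega), hmid,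
      List.getElem?_take_of_lt (by omega), List.getElem?_drop]
    congr 1
    omega
  · rw [reversePos, if_neg hk]
    unfold inInterior at hk
    by_cases hfst : k < fstIdx w v + 1
    · rw [if_pos hfst, List.getElem?_take_of_lt hfst]
    · rw [if_neg hfst, if_neg (by omega), List.getElem?_drop]
      congr 1
      omega

lemma IsDOW.idx_reverseInterior_of_not_inInterior (hw : IsDOW w)
    (h : ¬ (inInterior w v (fstIdx w u) ∧ inInterior w v (sndIdx w u))) :
    fstIdx (reverseInterior w v) u = reversePos w v (fstIdx w u) ∧
      sndIdx (reverseInterior w v) u = reversePos w v (sndIdx w u) := by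
  refine (isDOW_reverseInterior hw v).fstIdx_eq_and_sndIdx_eq
    (reversePos_lt_reversePos (fstIdx_lt_sndIdx w u) h) ?_ ?_
  all_goals rw [hw.getElem?_reverseInterior, reversePos_involutive]
  exacts [hw.getElem?_fstIdx u, hw.getElem?_sndIdx u]

lemma IsDOW.idx_reverseInterior_of_inInterior (hw : IsDOW w)
    (hfst : inInterior w v (fstIdx w u)) (hsnd : inInterior w v (sndIdx w u)) :
    fstIdx (reverseInterior w v) u = reversePos w v (sndIdx w u) ∧
      sndIdx (reverseInterior w v) u = reversePos w v (fstIdx w u) := by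
  refine (isDOW_reverseInterior hw v).fstIdx_eq_and_sndIdx_eq
    (reversePos_lt_reversePos_of_inInterior (fstIdx_lt_sndIdx w u) hfst hsnd) ?_ ?_
  all_goals rw [hw.getElem?_reverseInterior, reversePos_involutive]
  exacts [hw.getElem?_sndIdx u, hw.getElem?_fstIdx u]

lemma exactlyOneIn_iff :
    exactlyOneIn w v u ↔ (inInterior w v (fstIdx w u) ↔ ¬ inInterior w v (sndIdx w u)) :=
  xor_iff_iff_not

lemma IsDOW.inInterior_reverseInterior_of_not_exactlyOneIn (hw : IsDOW w)
    (hx : ¬ exactlyOneIn w v x) :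
    inInterior (reverseInterior w v) x (reversePos w v k) ↔ inInterior w x k := by
  have hlt := fstIdx_lt_sndIdx w x
  by_cases hboth : inInterior w v (fstIdx w x) ∧ inInterior w v (sndIdx w x)
  · obtain ⟨hfst, hsnd⟩ := hw.idx_reverseInterior_of_inInterior hboth.1 hboth.2
    grind [inInterior, reversePos]
  · obtain ⟨hfst, hsnd⟩ := hw.idx_reverseInterior_of_not_inInterior hboth
    have hneither : ¬ inInterior w v (fstIdx w x) ∧ ¬ inInterior w v (sndIdx w x) := by
      rw [exactlyOneIn_iff] at hx
      tauto
    grind [inInterior, reversePos]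

lemma IsDOW.inInterior_reverseInterior_of_exactlyOneIn (hw : IsDOW w)
    (hx : exactlyOneIn w v x) (hfst : k ≠ fstIdx w x) (hsnd : k ≠ sndIdx w x) :
    inInterior (reverseInterior w v) x (reversePos w v k) ↔
      (inInterior w x k ↔ ¬ inInterior w v k) := by
  have hlt := fstIdx_lt_sndIdx w x
  rw [exactlyOneIn_iff] at hx
  obtain ⟨hfst', hsnd'⟩ := hw.idx_reverseInterior_of_not_inInterior (v := v) (u := x) (by tauto)
  grind [inInterior, reversePos]

end Reversal

section RowOperations

variable {n α R : Type*} [DecidableEq n] [CommRing R]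

/-- The row operation which multiplies each row `x` by `s x` and adds `r x` times the original
row `v` to it. -/
def scaleAddRow (s r : n → R) (v : n) : Matrix n n R :=
  diagonal s + vecMulVec r (Pi.single v 1)

variable [Fintype n]

lemma scaleAddRow_mul_apply (s r : n → R) (v : n) (M : Matrix n α R) (x : n) (p : α) :
    (scaleAddRow s r v * M) x p = s x * M x p + r x * M v p := by
  simp [scaleAddRow, Matrix.add_mul, vecMulVec_mul, vecMulVec_apply]

lemma scaleAddRow_mul_self {s r : n → R} {v : n} (hs : ∀ x, s x * s x = 1)
    (hsv : s v = -1) (hrv : r v = 0) (hsr : ∀ x, s x * r x = r x) :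
    scaleAddRow s r v * scaleAddRow s r v = 1 := by
  ext x y
  rw [scaleAddRow_mul_apply]
  by_cases hxy : x = y
  · subst hxy
    by_cases hxv : v = x
    · subst hxv
      simp [scaleAddRow, vecMulVec_apply, hrv, hs]
    · simp [scaleAddRow, vecMulVec_apply, hs, hxv, Ne.symm hxv]
  · by_cases hvy : v = y
    · subst hvy
      simp [scaleAddRow, vecMulVec_apply, hxy, hsv, hrv, hsr]
    · simp [scaleAddRow, vecMulVec_apply, hxy, hvy, Ne.symm hvy]

end RowOperations

section Entries

variable {V : Type*} [DecidableEq V]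

/-- The indicator function of the interior of `x`, on positions. -/
def interiorIndicator (w : List V) (x : V) (k : ℕ) : ℤ := if inInterior w x k then 1 else 0

lemma interiorIndicator_fstIdx_self (w : List V) (x : V) :
    interiorIndicator w x (fstIdx w x) = 0 :=
  if_neg fun h => h.1.false

lemma interiorIndicator_sndIdx_self (w : List V) (x : V) :
    interiorIndicator w x (sndIdx w x) = 0 :=
  if_neg fun h => h.2.false

lemma IASword_phi (w : List V) (x u : V) : IASword w x (u, 0) = if x = u then 1 else 0 := rfl

lemma IASword_chi (w : List V) (x u : V) :
    IASword w x (u, 1) =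
      interiorIndicator w x (sndIdx w u) - interiorIndicator w x (fstIdx w u) := by
  by_cases hxu : x = u
  · subst hxu
    simp [IASword, interiorIndicator_fstIdx_self, interiorIndicator_sndIdx_self]
  · simp [IASword, interiorIndicator, hxu]

lemma IASword_psi (w : List V) (x u : V) :
    IASword w x (u, 2) = (if x = u then 1 else 0) +
      (interiorIndicator w x (fstIdx w u) + interiorIndicator w x (sndIdx w u)) := by
  by_cases hxu : x = u
  · subst hxu
    simp [IASword, interiorIndicator_fstIdx_self, interiorIndicator_sndIdx_self]
  · simp [IASword, interiorIndicator, hxu]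

end Entries

section ReversalRowOp

variable {V : Type*} [DecidableEq V] {w : List V} {u v x : V} {k : ℕ}

/-- The sign by which reversing the interior of `v` scales row `x`: it is `-1` when `x = v` or
both occurrences of `x` lie in the interior of `v`. -/
def rowSign (w : List V) (v x : V) : ℤ :=
  if fstIdx w v ≤ fstIdx w x ∧ sndIdx w x ≤ sndIdx w v then -1 else 1

/-- The multiple of row `v` which reversing the interior of `v` adds to row `x`: minus the number
of occurrences of `v` in the interior of `x`. -/
def rowCoeff (w : List V) (v x : V) : ℤ :=
  -(interiorIndicator w x (fstIdx w v) + interiorIndicator w x (sndIdx w v))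

/-- The unimodular matrix `U` for which `IAS_{w'}` is `U * IAS_w` up to a permutation of the columns
and their signs, where `w'` is `w` with the interior of `v` reversed. -/
def reversalRowOp (w : List V) (v : V) : Matrix V V ℤ :=
  scaleAddRow (rowSign w v) (rowCoeff w v) v

lemma rowSign_eq_one_or_neg_one (w : List V) (v x : V) : rowSign w v x = 1 ∨ rowSign w v x = -1 :=
  (ite_eq_or_eq _ _ _).symm

lemma rowSign_self (w : List V) (v : V) : rowSign w v v = -1 := by simp [rowSign]

lemma rowCoeff_self (w : List V) (v : V) : rowCoeff w v v = 0 := by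
  simp [rowCoeff, interiorIndicator_fstIdx_self, interiorIndicator_sndIdx_self]

lemma rowSign_mul_rowCoeff (w : List V) (v x : V) :
    rowSign w v x * rowCoeff w v x = rowCoeff w v x := by
  grind [rowSign, rowCoeff, interiorIndicator, inInterior]

lemma rowSign_eq_neg_one_of_inInterior (hfst : inInterior w v (fstIdx w u))
    (hsnd : inInterior w v (sndIdx w u)) : rowSign w v u = -1 :=
  if_pos ⟨hfst.1.le, hsnd.2.le⟩

lemma IsDOW.rowSign_eq_one_of_not_inInterior (hw : IsDOW w) (huv : u ≠ v)
    (h : ¬ (inInterior w v (fstIdx w u) ∧ inInterior w v (sndIdx w u))) : rowSign w v u = 1 := by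
  have hlt := fstIdx_lt_sndIdx w u
  have hfst := hw.fstIdx_ne_and_sndIdx_ne huv.symm (hw.getElem?_fstIdx u)
  have hsnd := hw.fstIdx_ne_and_sndIdx_ne huv.symm (hw.getElem?_sndIdx u)
  grind [rowSign, inInterior]

lemma rowCoeff_eq_zero_of_rowSign_eq_neg_one (h : rowSign w v x = -1) : rowCoeff w v x = 0 := by
  linarith [h ▸ rowSign_mul_rowCoeff w v x]

lemma ne_of_exactlyOneIn (h : exactlyOneIn w v u) : u ≠ v := by
  rintro rfl
  grind [exactlyOneIn_iff, inInterior]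

lemma IsDOW.rowSign_eq_one_of_exactlyOneIn (hw : IsDOW w) (h : exactlyOneIn w v u) :
    rowSign w v u = 1 := by
  refine hw.rowSign_eq_one_of_not_inInterior (ne_of_exactlyOneIn h) ?_
  rw [exactlyOneIn_iff] at h
  tauto

lemma IsDOW.rowCoeff_eq_neg_one_of_exactlyOneIn (hw : IsDOW w) (h : exactlyOneIn w v u) :
    rowCoeff w v u = -1 := by
  have hlt := fstIdx_lt_sndIdx w u
  have huv := ne_of_exactlyOneIn h
  have hfst := hw.fstIdx_ne_and_sndIdx_ne huv.symm (hw.getElem?_fstIdx u)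
  have hsnd := hw.fstIdx_ne_and_sndIdx_ne huv.symm (hw.getElem?_sndIdx u)
  rw [exactlyOneIn_iff] at h
  grind [rowCoeff, interiorIndicator, inInterior]

lemma IsDOW.rowCoeff_eq_of_not_inInterior (hw : IsDOW w) (hxv : x ≠ v)
    (hfst : ¬ inInterior w v (fstIdx w x)) (hsnd : ¬ inInterior w v (sndIdx w x))
    (hk : inInterior w v k) : rowCoeff w v x = -2 * interiorIndicator w x k := by
  have hne := hw.fstIdx_ne_and_sndIdx_ne hxv.symm (hw.getElem?_fstIdx x)
  have hne' := hw.fstIdx_ne_and_sndIdx_ne hxv.symm (hw.getElem?_sndIdx x)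
  grind [rowCoeff, interiorIndicator, inInterior]

lemma interiorIndicator_mul_of_rowSign_eq_neg_one (h : rowSign w v x = -1) (k : ℕ) :
    interiorIndicator w x k * interiorIndicator w v k = interiorIndicator w x k := by
  grind [rowSign, interiorIndicator, inInterior]

lemma IsDOW.interiorIndicator_reverseInterior (hw : IsDOW w) (v : V) (hk : w[k]? ≠ some x) :
    interiorIndicator (reverseInterior w v) x (reversePos w v k) =
      (1 - 2 * interiorIndicator w v k) *
        (rowSign w v x * interiorIndicator w x k + rowCoeff w v x * interiorIndicator w v k) := by
  by_cases hx : exactlyOneIn w v x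
  · rw [Ne, hw.getElem?_eq_some_iff, not_or] at hk
    have hiff := hw.inInterior_reverseInterior_of_exactlyOneIn hx hk.1 hk.2
    rw [hw.rowSign_eq_one_of_exactlyOneIn hx, hw.rowCoeff_eq_neg_one_of_exactlyOneIn hx]
    grind [interiorIndicator]
  · have hind : interiorIndicator (reverseInterior w v) x (reversePos w v k) =
        interiorIndicator w x k :=
      if_congr (hw.inInterior_reverseInterior_of_not_exactlyOneIn hx) rfl rfl
    rw [hind]
    rcases rowSign_eq_one_or_neg_one w v x with hsign | hsign
    · by_cases hkv : inInterior w v k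
      · have hxv : x ≠ v := by
          rintro rfl
          simp [rowSign_self] at hsign
        have hneither : ¬ inInterior w v (fstIdx w x) ∧ ¬ inInterior w v (sndIdx w x) := by
          rw [exactlyOneIn_iff] at hx
          grind [rowSign_eq_neg_one_of_inInterior]
        have hcoeff := hw.rowCoeff_eq_of_not_inInterior hxv hneither.1 hneither.2 hkv
        rw [hsign, hcoeff, show interiorIndicator w v k = 1 from if_pos hkv]
        ring
      · simp [hsign, show interiorIndicator w v k = 0 from if_neg hkv]
    · rw [hsign, rowCoeff_eq_zero_of_rowSign_eq_neg_one hsign]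
      linear_combination -2 * interiorIndicator_mul_of_rowSign_eq_neg_one hsign k

lemma IsDOW.interiorIndicator_reverseInterior_of_ne (hw : IsDOW w) (v : V) (hux : u ≠ x) :
    interiorIndicator (reverseInterior w v) x (reversePos w v (fstIdx w u)) =
        (1 - 2 * interiorIndicator w v (fstIdx w u)) *
          (rowSign w v x * interiorIndicator w x (fstIdx w u) +
            rowCoeff w v x * interiorIndicator w v (fstIdx w u)) ∧
      interiorIndicator (reverseInterior w v) x (reversePos w v (sndIdx w u)) =
        (1 - 2 * interiorIndicator w v (sndIdx w u)) *
          (rowSign w v x * interiorIndicator w x (sndIdx w u) +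
            rowCoeff w v x * interiorIndicator w v (sndIdx w u)) :=
  ⟨hw.interiorIndicator_reverseInterior v (by simpa [hw.getElem?_fstIdx] using hux),
    hw.interiorIndicator_reverseInterior v (by simpa [hw.getElem?_sndIdx] using hux)⟩

lemma IsDOW.interiorIndicator_reverseInterior_self (hw : IsDOW w) (v x : V) :
    interiorIndicator (reverseInterior w v) x (fstIdx (reverseInterior w v) v) =
        rowSign w v x * interiorIndicator w x (fstIdx w v) ∧
      interiorIndicator (reverseInterior w v) x (sndIdx (reverseInterior w v) v) =
        rowSign w v x * interiorIndicator w x (sndIdx w v) := by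
  by_cases hxv : x = v
  · subst hxv
    simp [interiorIndicator_fstIdx_self, interiorIndicator_sndIdx_self]
  · have hidx := hw.idx_reverseInterior_of_not_inInterior (v := v) (u := v) fun h => h.1.1.false
    obtain ⟨hfst, hsnd⟩ := hw.interiorIndicator_reverseInterior_of_ne v (Ne.symm hxv)
    simp [hidx, hfst, hsnd, interiorIndicator_fstIdx_self, interiorIndicator_sndIdx_self]

end ReversalRowOp

section Columns

variable {V : Type*} [DecidableEq V] {w : List V} {u v : V}

lemma najiPerm_self (w : List V) (v : V) :
    najiPerm w v (v, 0) = (v, 2) ∧ najiPerm w v (v, 1) = (v, 1) ∧ najiPerm w v (v, 2) = (v, 0) := by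
  simp [najiPerm]

lemma najiPerm_phi_of_ne (huv : u ≠ v) : najiPerm w v (u, 0) = (u, 0) := by
  simp [najiPerm, huv]

lemma najiPerm_of_exactlyOneIn (h : exactlyOneIn w v u) :
    najiPerm w v (u, 1) = (u, 2) ∧ najiPerm w v (u, 2) = (u, 1) := by
  simp [najiPerm, ne_of_exactlyOneIn h, h]

lemma najiPerm_of_not_exactlyOneIn (huv : u ≠ v) (h : ¬ exactlyOneIn w v u) (i : Fin 3) :
    najiPerm w v (u, i) = (u, i) := by
  simp [najiPerm, huv, h]

variable [Fintype V]

lemma reversalRowOp_mul_apply {α : Type*} (w : List V) (v x : V) (M : Matrix V α ℤ) (p : α) :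
    (reversalRowOp w v * M) x p = rowSign w v x * M x p + rowCoeff w v x * M v p :=
  scaleAddRow_mul_apply _ _ _ _ _ _

lemma det_reversalRowOp (w : List V) (v : V) :
    (reversalRowOp w v).det = 1 ∨ (reversalRowOp w v).det = -1 := by
  have hinv : reversalRowOp w v * reversalRowOp w v = 1 :=
    scaleAddRow_mul_self
      (fun x => by rcases rowSign_eq_one_or_neg_one w v x with h | h <;> simp [h])
      (rowSign_self w v) (rowCoeff_self w v) (rowSign_mul_rowCoeff w v)
  have hdet := congrArg Matrix.det hinv
  rw [det_mul, det_one] at hdet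
  exact Int.isUnit_iff.1 (IsUnit.of_mul_eq_one _ hdet)

lemma IASword_reverseInterior_phi (huv : u ≠ v) (x : V) :
    IASword (reverseInterior w v) x (u, 0) =
      rowSign w v u * (reversalRowOp w v * IASword w) x (u, 0) := by
  rw [reversalRowOp_mul_apply]
  simp only [IASword_phi]
  rcases rowSign_eq_one_or_neg_one w v u with h | h <;> grind

lemma IASword_reverseInterior_phi_self (w : List V) (v x : V) :
    IASword (reverseInterior w v) x (v, 0) =
      -(reversalRowOp w v * IASword w) x (v, 2) := by
  have hcoeff := rowSign_mul_rowCoeff w v x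
  rw [reversalRowOp_mul_apply]
  simp only [IASword_phi, IASword_psi, interiorIndicator_fstIdx_self,
    interiorIndicator_sndIdx_self]
  have := rowSign_self w v
  unfold rowCoeff at *
  grind

lemma IsDOW.IASword_reverseInterior_chi_self (hw : IsDOW w) (v x : V) :
    IASword (reverseInterior w v) x (v, 1) =
      (reversalRowOp w v * IASword w) x (v, 1) := by
  obtain ⟨hfst, hsnd⟩ := hw.interiorIndicator_reverseInterior_self v x
  rw [reversalRowOp_mul_apply]
  simp only [IASword_chi, interiorIndicator_fstIdx_self, interiorIndicator_sndIdx_self, hfst, hsnd]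
  ring

lemma IsDOW.IASword_reverseInterior_psi_self (hw : IsDOW w) (v x : V) :
    IASword (reverseInterior w v) x (v, 2) =
      -(reversalRowOp w v * IASword w) x (v, 0) := by
  have hcoeff := rowSign_mul_rowCoeff w v x
  obtain ⟨hfst, hsnd⟩ := hw.interiorIndicator_reverseInterior_self v x
  rw [reversalRowOp_mul_apply]
  simp only [IASword_phi, IASword_psi, hfst, hsnd]
  have := rowSign_self w v
  unfold rowCoeff at *
  grind

lemma IsDOW.IASword_reverseInterior_of_not_inInterior (hw : IsDOW w) (huv : u ≠ v)
    (hfst : ¬ inInterior w v (fstIdx w u)) (hsnd : ¬ inInterior w v (sndIdx w u)) (x : V) :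
    IASword (reverseInterior w v) x (u, 1) = (reversalRowOp w v * IASword w) x (u, 1) ∧
      IASword (reverseInterior w v) x (u, 2) = (reversalRowOp w v * IASword w) x (u, 2) := by
  have hfst₁ : interiorIndicator w v (fstIdx w u) = 0 := if_neg hfst
  have hsnd₁ : interiorIndicator w v (sndIdx w u) = 0 := if_neg hsnd
  have hidx := hw.idx_reverseInterior_of_not_inInterior fun h => hfst h.1
  simp only [reversalRowOp_mul_apply, IASword_chi, IASword_psi]
  by_cases hxu : x = u
  · subst hxu
    simp [interiorIndicator_fstIdx_self, interiorIndicator_sndIdx_self, hfst₁, hsnd₁, huv.symm,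
      hw.rowSign_eq_one_of_not_inInterior huv fun h => hfst h.1]
  · obtain ⟨hfst', hsnd'⟩ := hw.interiorIndicator_reverseInterior_of_ne v (Ne.symm hxu)
    simp only [hidx, hfst', hsnd', hfst₁, hsnd₁, hxu, huv.symm, if_false]
    constructor <;> ring

lemma IsDOW.IASword_reverseInterior_of_inInterior (hw : IsDOW w)
    (hfst : inInterior w v (fstIdx w u)) (hsnd : inInterior w v (sndIdx w u)) (x : V) :
    IASword (reverseInterior w v) x (u, 1) = (reversalRowOp w v * IASword w) x (u, 1) ∧
      IASword (reverseInterior w v) x (u, 2) = -(reversalRowOp w v * IASword w) x (u, 2) := by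
  have hfst₁ : interiorIndicator w v (fstIdx w u) = 1 := if_pos hfst
  have hsnd₁ : interiorIndicator w v (sndIdx w u) = 1 := if_pos hsnd
  have hsign := rowSign_eq_neg_one_of_inInterior hfst hsnd
  have hcoeff := rowCoeff_eq_zero_of_rowSign_eq_neg_one hsign
  have huv : u ≠ v := by rintro rfl; exact hfst.1.false
  have hidx := hw.idx_reverseInterior_of_inInterior hfst hsnd
  simp only [reversalRowOp_mul_apply, IASword_chi, IASword_psi]
  by_cases hxu : x = u
  · subst hxu
    simp [interiorIndicator_fstIdx_self, interiorIndicator_sndIdx_self, hfst₁, hsnd₁, huv.symm,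
      hsign, hcoeff]
  · obtain ⟨hfst', hsnd'⟩ := hw.interiorIndicator_reverseInterior_of_ne v (Ne.symm hxu)
    simp only [hidx, hfst', hsnd', hfst₁, hsnd₁, hxu, huv.symm, if_false]
    constructor <;> ring

lemma IsDOW.IASword_reverseInterior_of_sndIdx_inInterior (hw : IsDOW w)
    (hfst : ¬ inInterior w v (fstIdx w u)) (hsnd : inInterior w v (sndIdx w u)) (x : V) :
    IASword (reverseInterior w v) x (u, 1) = -(reversalRowOp w v * IASword w) x (u, 2) ∧
      IASword (reverseInterior w v) x (u, 2) = -(reversalRowOp w v * IASword w) x (u, 1) := by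
  have hfst₁ : interiorIndicator w v (fstIdx w u) = 0 := if_neg hfst
  have hsnd₁ : interiorIndicator w v (sndIdx w u) = 1 := if_pos hsnd
  have hone : exactlyOneIn w v u := Or.inr ⟨hsnd, hfst⟩
  have huv := ne_of_exactlyOneIn hone
  have hidx := hw.idx_reverseInterior_of_not_inInterior fun h => hfst h.1
  simp only [reversalRowOp_mul_apply, IASword_chi, IASword_psi]
  by_cases hxu : x = u
  · subst hxu
    simp [interiorIndicator_fstIdx_self, interiorIndicator_sndIdx_self, hfst₁, hsnd₁, huv.symm,
      hw.rowSign_eq_one_of_exactlyOneIn hone, hw.rowCoeff_eq_neg_one_of_exactlyOneIn hone]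
  · obtain ⟨hfst', hsnd'⟩ := hw.interiorIndicator_reverseInterior_of_ne v (Ne.symm hxu)
    simp only [hidx, hfst', hsnd', hfst₁, hsnd₁, hxu, huv.symm, if_false]
    constructor <;> ring

lemma IsDOW.IASword_reverseInterior_of_fstIdx_inInterior (hw : IsDOW w)
    (hfst : inInterior w v (fstIdx w u)) (hsnd : ¬ inInterior w v (sndIdx w u)) (x : V) :
    IASword (reverseInterior w v) x (u, 1) = (reversalRowOp w v * IASword w) x (u, 2) ∧
      IASword (reverseInterior w v) x (u, 2) = (reversalRowOp w v * IASword w) x (u, 1) := by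
  have hfst₁ : interiorIndicator w v (fstIdx w u) = 1 := if_pos hfst
  have hsnd₁ : interiorIndicator w v (sndIdx w u) = 0 := if_neg hsnd
  have hone : exactlyOneIn w v u := Or.inl ⟨hfst, hsnd⟩
  have huv := ne_of_exactlyOneIn hone
  have hidx := hw.idx_reverseInterior_of_not_inInterior fun h => hsnd h.2
  simp only [reversalRowOp_mul_apply, IASword_chi, IASword_psi]
  by_cases hxu : x = u
  · subst hxu
    simp [interiorIndicator_fstIdx_self, interiorIndicator_sndIdx_self, hfst₁, hsnd₁, huv.symm,
      hw.rowSign_eq_one_of_exactlyOneIn hone, hw.rowCoeff_eq_neg_one_of_exactlyOneIn hone]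
  · obtain ⟨hfst', hsnd'⟩ := hw.interiorIndicator_reverseInterior_of_ne v (Ne.symm hxu)
    simp only [hidx, hfst', hsnd', hfst₁, hsnd₁, hxu, huv.symm, if_false]
    constructor <;> ring

lemma IsDOW.exists_sign_forall_IASword_reverseInterior_of_exactlyOneIn (hw : IsDOW w)
    (hone : exactlyOneIn w v u) :
    ∃ d : ℤ, (d = 1 ∨ d = -1) ∧ ∀ x,
      IASword (reverseInterior w v) x (u, 1) = (reversalRowOp w v * IASword w) x (u, 2) * d ∧
        IASword (reverseInterior w v) x (u, 2) = (reversalRowOp w v * IASword w) x (u, 1) * d := by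
  rcases hone with ⟨hfst, hsnd⟩ | ⟨hsnd, hfst⟩
  · exact ⟨1, by simp, by
      simpa using hw.IASword_reverseInterior_of_fstIdx_inInterior hfst hsnd⟩
  · exact ⟨-1, by simp, by
      simpa using hw.IASword_reverseInterior_of_sndIdx_inInterior hfst hsnd⟩

lemma IsDOW.exists_sign_forall_IASword_reverseInterior_of_not_exactlyOneIn (hw : IsDOW w)
    (huv : u ≠ v) (hone : ¬ exactlyOneIn w v u) :
    (∀ x, IASword (reverseInterior w v) x (u, 1) = (reversalRowOp w v * IASword w) x (u, 1)) ∧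
      ∃ d : ℤ, (d = 1 ∨ d = -1) ∧ ∀ x,
        IASword (reverseInterior w v) x (u, 2) = (reversalRowOp w v * IASword w) x (u, 2) * d := by
  rw [exactlyOneIn_iff] at hone
  by_cases hfst : inInterior w v (fstIdx w u)
  · have hcol := hw.IASword_reverseInterior_of_inInterior hfst (by tauto)
    exact ⟨fun x => (hcol x).1, -1, by simp, by simpa using fun x => (hcol x).2⟩
  · have hcol := hw.IASword_reverseInterior_of_not_inInterior huv hfst (by tauto)
    exact ⟨fun x => (hcol x).1, 1, by simp, by simpa using fun x => (hcol x).2⟩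

lemma IsDOW.exists_sign_forall_IASword_reverseInterior (hw : IsDOW w) (v : V) (p : V × Fin 3) :
    ∃ d : ℤ, (d = 1 ∨ d = -1) ∧ ∀ x, IASword (reverseInterior w v) x p =
      (reversalRowOp w v * IASword w) x (najiPerm w v p) * d := by
  obtain ⟨u, i⟩ := p
  by_cases huv : u = v
  · subst huv
    obtain ⟨hphi, hchi, hpsi⟩ := najiPerm_self w u
    fin_cases i
    · exact ⟨-1, by simp, by simp [hphi, IASword_reverseInterior_phi_self]⟩
    · exact ⟨1, by simp, by simp [hchi, hw.IASword_reverseInterior_chi_self]⟩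
    · exact ⟨-1, by simp, by simp [hpsi, hw.IASword_reverseInterior_psi_self]⟩
  have hphi : ∀ x, IASword (reverseInterior w v) x (u, 0) =
      (reversalRowOp w v * IASword w) x (najiPerm w v (u, 0)) * rowSign w v u := by
    simp [najiPerm_phi_of_ne huv, IASword_reverseInterior_phi huv, mul_comm]
  by_cases hone : exactlyOneIn w v u
  · obtain ⟨d, hd, hcol⟩ := hw.exists_sign_forall_IASword_reverseInterior_of_exactlyOneIn hone
    obtain ⟨hchi, hpsi⟩ := najiPerm_of_exactlyOneIn hone
    fin_cases i
    · exact ⟨_, rowSign_eq_one_or_neg_one w v u, hphi⟩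
    · exact ⟨d, hd, fun x => hchi ▸ (hcol x).1⟩
    · exact ⟨d, hd, fun x => hpsi ▸ (hcol x).2⟩
  · obtain ⟨hchi, d, hd, hpsi⟩ :=
      hw.exists_sign_forall_IASword_reverseInterior_of_not_exactlyOneIn huv hone
    have hperm := najiPerm_of_not_exactlyOneIn huv hone
    fin_cases i
    · exact ⟨_, rowSign_eq_one_or_neg_one w v u, hphi⟩
    · exact ⟨1, by simp, by simp [hperm, hchi]⟩
    · exact ⟨d, hd, fun x => (hperm 2).symm ▸ hpsi x⟩

end Columns

/-- Reversing the interior of `v` changes `IAS_w` by unimodular integer row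
operations, the column permutation `najiPerm`, and column sign changes:
`IAS_{w'} = U · (IAS_w ∘ π) · D` with `det U = ±1` and `D = diag(±1)`. -/
theorem IASword_reverseInterior_equivalence
    {V : Type} [Fintype V] [DecidableEq V] (w : List V) (hw : IsDOW w) (v : V) :
    ∃ (U : Matrix V V ℤ) (d : V × Fin 3 → ℤ),
      (U.det = 1 ∨ U.det = -1) ∧ (∀ p, d p = 1 ∨ d p = -1) ∧
      IASword (reverseInterior w v)
        = U * (IASword w).submatrix id (najiPerm w v) * Matrix.diagonal d := by
  choose d hd hcol using hw.exists_sign_forall_IASword_reverseInterior v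
  refine ⟨reversalRowOp w v, d, det_reversalRowOp w v, hd, ?_⟩
  ext x p
  rw [mul_diagonal, hcol]
  rfl
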